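/- arXiv:2306.05154 — 2 statements merged into one kernel-verified Lean document; each statement's English description precedes it below -/
import Mathlib

section
/- Let f₁, …, f_k be signomials on ℝⁿ_{>0} and let w ∈ ⋂_{i=1}^{k} N_{f_i}^-. If w lies in the closure of the interior of ⋂_{i=1}^{k} N_{f_i}^-, then there exists v ∈ ℝⁿ such that for every i = 1, …, k the face N(f_i)_v is a negative vertex of N(f_i) contained in the face N(f_i)_w. -/
/-- A signomial on the positive orthant `ℝⁿ_{>0}`: a function
`x ↦ ∑_{μ ∈ supp} coeff μ * x ^ μ` with finite support and nonzero coefficients. -/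
structure Signomial (n : ℕ) where
  supp : Finset (Fin n → ℝ)
  coeff : (Fin n → ℝ) → ℝ
  coeff_ne_zero : ∀ μ ∈ supp, coeff μ ≠ 0
  coeff_eq_zero : ∀ μ ∉ supp, coeff μ = 0

namespace Signomial

variable {n : ℕ}

/-- The monomial `x^μ = ∏ i, x i ^ μ i` (real exponents). -/
noncomputable def mono (x μ : Fin n → ℝ) : ℝ := ∏ i, x i ^ μ i

/-- Evaluation of a signomial. -/
noncomputable def eval (f : Signomial n) (x : Fin n → ℝ) : ℝ :=
  ∑ μ ∈ f.supp, f.coeff μ * mono x μ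

open Classical in
/-- Evaluation of the restriction `f_{|S}` of `f` to a set `S ⊆ ℝⁿ`. -/
noncomputable def evalOn (f : Signomial n) (S : Set (Fin n → ℝ)) (x : Fin n → ℝ) : ℝ :=
  ∑ μ ∈ f.supp, if μ ∈ S then f.coeff μ * mono x μ else 0

/-- The Newton polytope `N(f) = conv(σ(f))`. -/
def newton (f : Signomial n) : Set (Fin n → ℝ) :=
  convexHull ℝ (f.supp : Set (Fin n → ℝ))

/-- Euclidean scalar product on `Fin n → ℝ`. -/
noncomputable def dot (v μ : Fin n → ℝ) : ℝ := ∑ i, v i * μ i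

/-- The face `N(f)_v` of the Newton polytope cut out by `v`. -/
def faceAt (f : Signomial n) (v : Fin n → ℝ) : Set (Fin n → ℝ) :=
  {μ ∈ f.newton | ∀ ν ∈ f.newton, dot v ν ≤ dot v μ}

/-- `F` is a (nonempty, exposed) face of the Newton polytope of `f`. -/
def IsFace (f : Signomial n) (F : Set (Fin n → ℝ)) : Prop :=
  F.Nonempty ∧ ∃ v, F = f.faceAt v

/-- The (outer) normal cone of a face `F` of `N(f)`. -/
def normalCone (f : Signomial n) (F : Set (Fin n → ℝ)) : Set (Fin n → ℝ) :=
  {v | F ⊆ f.faceAt v}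

/-- The negative normal cone `N_f^- = {v | N(f)_v ∩ σ₋(f) ≠ ∅}`. -/
def negCone (f : Signomial n) : Set (Fin n → ℝ) :=
  {v | ∃ μ ∈ f.supp, f.coeff μ < 0 ∧ μ ∈ f.faceAt v}

/-- The positive orthant `ℝⁿ_{>0}`. -/
def posOrth (n : ℕ) : Set (Fin n → ℝ) := {x | ∀ i, 0 < x i}

/-- `S(f) = f⁻¹(ℝ_{<0})` (inside the positive orthant). -/
def negSet₁ (f : Signomial n) : Set (Fin n → ℝ) :=
  {x ∈ posOrth n | f.eval x < 0}

/-- `S(f₁, …, f_k) = ⋂ᵢ fᵢ⁻¹(ℝ_{<0})` (inside the positive orthant). -/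
def negSet {k : ℕ} (f : Fin k → Signomial n) : Set (Fin n → ℝ) :=
  {x ∈ posOrth n | ∀ i, (f i).eval x < 0}

/-- The actual negative normal cone `Σ(f)` of a single signomial. -/
def actualNegCone₁ (f : Signomial n) : Set (Fin n → ℝ) :=
  {v | ∃ x ∈ posOrth n, f.evalOn (f.faceAt v) x < 0}

/-- The actual negative normal cone `Σ(f₁, …, f_k)`. -/
def actualNegCone {k : ℕ} (f : Fin k → Signomial n) : Set (Fin n → ℝ) :=
  {v | ∃ x ∈ posOrth n, ∀ i, (f i).evalOn ((f i).faceAt v) x < 0}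

/-- The real tropicalization (logarithmic limit set) of `S ⊆ ℝⁿ_{>0}`:
`w ∈ Trop(S)` iff there are sequences `x(m) ∈ S`, `t(m) ∈ (1,∞)` with `t(m) → ∞` and
`Log_{t(m)}(x(m)) → w`. -/
def trop (S : Set (Fin n → ℝ)) : Set (Fin n → ℝ) :=
  {w | ∃ (x : ℕ → Fin n → ℝ) (t : ℕ → ℝ),
    (∀ m, x m ∈ S) ∧ (∀ m, 1 < t m) ∧
    Filter.Tendsto t Filter.atTop Filter.atTop ∧
    Filter.Tendsto (fun m i => Real.log (x m i) / Real.log (t m))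
      Filter.atTop (nhds w)}

open Classical in
/-- The support of the restriction `f_{|F}`, i.e. `σ(f) ∩ F`. -/
noncomputable def restSupp (f : Signomial n) (F : Set (Fin n → ℝ)) : Finset (Fin n → ℝ) :=
  f.supp.filter (fun μ => μ ∈ F)

/-- Evaluation of the signomial with coefficient vector `c ∈ ℝ^A`. -/
noncomputable def evalVec (A : Finset (Fin n → ℝ)) (c : A → ℝ) (x : Fin n → ℝ) : ℝ :=
  ∑ μ : A, c μ * mono x (μ : Fin n → ℝ)

/-- The nonnegativity cone `P⁺_A ⊆ ℝ^A`. -/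
def nonnegConeSet (A : Finset (Fin n → ℝ)) : Set (A → ℝ) :=
  {c | ∀ x ∈ posOrth n, 0 ≤ evalVec A c x}

/-- The coefficient vector of `f` viewed in `ℝ^A`. -/
def coeffVec (f : Signomial n) (A : Finset (Fin n → ℝ)) : A → ℝ :=
  fun μ => f.coeff μ

/-- The non-boundary condition (NB): for every face `F` of `N(f)`, if `f_{|F}` is
nonnegative on the positive orthant then it lies in the interior of the nonnegativity
cone `P⁺_{σ(f) ∩ F}`. -/
def NBcond (f : Signomial n) : Prop :=
  ∀ F : Set (Fin n → ℝ), f.IsFace F →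
    coeffVec f (f.restSupp F) ∈ nonnegConeSet (f.restSupp F) →
    coeffVec f (f.restSupp F) ∈ interior (nonnegConeSet (f.restSupp F))

end Signomial

/-!
Near `w` the faces of a polytope can only shrink, so for `v` close to `w` every `N(fᵢ)_v` lies in
`N(fᵢ)_w`. The `v` separating the points of `⋃ᵢ σ(fᵢ)` are dense, because finitely many proper
subspaces have a dense open complement; for such `v` each face `N(fᵢ)_v`, being the convex hull of
the support points it contains, is a single point. Since `w` is a limit of interior points of
`⋂ᵢ N_{fᵢ}^-`, some `v` close to `w` is both generic and in every `N_{fᵢ}^-`, which forces the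
vertices to be negative.
-/

open Filter Set Topology

theorem convexHull_inter_of_isExtreme {𝕜 E : Type*} [Semiring 𝕜] [PartialOrder 𝕜] [IsOrderedRing 𝕜]
    [AddCommMonoid E] [Module 𝕜 E] {s F : Set E}
    (hF : IsExtreme 𝕜 (convexHull 𝕜 s) F) (hconv : Convex 𝕜 F) : convexHull 𝕜 (s ∩ F) = F := by
  refine (convexHull_min inter_subset_right hconv).antisymm fun x hx => ?_
  -- Extremality makes this set of points convex: an open segment meeting `F` has its ends in `F`.
  suffices convexHull 𝕜 s ⊆ {y ∈ convexHull 𝕜 s | y ∈ F → y ∈ convexHull 𝕜 (s ∩ F)} from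
    (this (hF.subset hx)).2 hx
  refine convexHull_min
    (fun y hy => ⟨subset_convexHull 𝕜 s hy, fun hyF => subset_convexHull 𝕜 _ ⟨hy, hyF⟩⟩) ?_
  rw [convex_iff_openSegment_subset]
  rintro y ⟨hy, hyF⟩ z ⟨hz, hzF⟩ p hp
  refine ⟨(convex_convexHull 𝕜 s).openSegment_subset hy hz hp, fun hpF => ?_⟩
  exact (convex_convexHull 𝕜 (s ∩ F)).openSegment_subset
    (hyF (hF.left_mem_of_mem_openSegment hy hz hpF hp))
    (hzF (hF.right_mem_of_mem_openSegment hy hz hpF hp)) hp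

theorem dense_compl_submodule {𝕜 E : Type*} [NontriviallyNormedField 𝕜] [AddCommGroup E]
    [Module 𝕜 E] [TopologicalSpace E] [ContinuousAdd E] [ContinuousSMul 𝕜 E]
    {p : Submodule 𝕜 E} (hp : p ≠ ⊤) : Dense (p : Set E)ᶜ := by
  rw [← interior_eq_empty_iff_dense_compl]
  exact not_nonempty_iff_eq_empty.mp fun h => hp (p.eq_top_of_nonempty_interior' h)

namespace Signomial

section Dot

theorem continuous_dot_left (μ : Fin n → ℝ) : Continuous fun v => dot v μ := by
  unfold dot
  fun_prop

theorem isOpen_setOf_dot_ne (μ ν : Fin n → ℝ) : IsOpen {v | dot v μ ≠ dot v ν} :=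
  isOpen_ne_fun (continuous_dot_left μ) (continuous_dot_left ν)

theorem dense_setOf_dot_ne {μ ν : Fin n → ℝ} (h : μ ≠ ν) : Dense {v | dot v μ ≠ dot v ν} := by
  let p : Submodule ℝ (Fin n → ℝ) := LinearMap.ker (dotProductBilin ℝ ℝ (μ - ν))
  have hp : p ≠ ⊤ := fun htop =>
    have hmem : μ - ν ∈ p := htop ▸ Submodule.mem_top
    sub_ne_zero.mpr h (dotProduct_self_eq_zero.mp hmem)
  convert dense_compl_submodule hp using 1
  ext v
  change v ⬝ᵥ μ ≠ v ⬝ᵥ ν ↔ (μ - ν) ⬝ᵥ v ≠ 0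
  rw [dotProduct_comm (μ - ν), dotProduct_sub, sub_ne_zero]

theorem dense_setOf_injOn_dot {s : Set (Fin n → ℝ)} (hs : s.Finite) :
    Dense {v | InjOn (dot v) s} := by
  have hsep : Dense (⋂ p ∈ s.offDiag, {v | dot v p.1 ≠ dot v p.2}) :=
    dense_biInter_of_isOpen (fun p _ => isOpen_setOf_dot_ne p.1 p.2) hs.offDiag.countable
      fun p hp => dense_setOf_dot_ne hp.2.2
  refine hsep.mono fun v hv μ hμ ν hν heq => ?_
  by_contra hne
  exact mem_iInter₂.mp hv (μ, ν) ⟨hμ, hν, hne⟩ heq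

end Dot

section Face

variable (f : Signomial n) {v μ : Fin n → ℝ}

theorem isExposed_faceAt (v : Fin n → ℝ) : IsExposed ℝ f.newton (f.faceAt v) :=
  fun _ => ⟨(dotProductBilin ℝ ℝ v).toContinuousLinearMap, rfl⟩

theorem convex_faceAt (v : Fin n → ℝ) : Convex ℝ (f.faceAt v) :=
  (f.isExposed_faceAt v).convex (convex_convexHull ℝ _)

theorem convexHull_supp_inter_faceAt (v : Fin n → ℝ) :
    convexHull ℝ (f.supp ∩ f.faceAt v) = f.faceAt v :=
  convexHull_inter_of_isExtreme (f.isExposed_faceAt v).isExtreme (f.convex_faceAt v)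

variable {f}

theorem mem_faceAt_iff_of_mem_supp (hμ : μ ∈ f.supp) :
    μ ∈ f.faceAt v ↔ ∀ ν ∈ f.supp, dot v ν ≤ dot v μ := by
  refine ⟨fun h ν hν => h.2 ν (subset_convexHull ℝ _ hν),
    fun h => ⟨subset_convexHull ℝ _ hμ, fun ν hν => ?_⟩⟩
  exact convexHull_min h (convex_halfSpace_le (dotProductBilin ℝ ℝ v).isLinear _) hν

theorem faceAt_eq_singleton_of_injOn (hinj : InjOn (dot v) f.supp) (hμ : μ ∈ f.supp)
    (hμv : μ ∈ f.faceAt v) : f.faceAt v = {μ} := by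
  have hunique : (f.supp ∩ f.faceAt v : Set (Fin n → ℝ)) = {μ} :=
    eq_singleton_iff_unique_mem.mpr ⟨⟨hμ, hμv⟩, fun ν ⟨hν, hνv⟩ =>
      hinj hν hμ ((hμv.2 ν hνv.1).antisymm (hνv.2 μ hμv.1))⟩
  rw [← f.convexHull_supp_inter_faceAt v, hunique, convexHull_singleton]

variable (f)

theorem eventually_faceAt_subset (w : Fin n → ℝ) : ∀ᶠ v in 𝓝 w, f.faceAt v ⊆ f.faceAt w := by
  have hsupp : ∀ᶠ v in 𝓝 w, ∀ μ ∈ f.supp, μ ∈ f.faceAt v → μ ∈ f.faceAt w := by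
    refine (eventually_all_finset f.supp).mpr fun μ hμ => ?_
    by_cases hμw : μ ∈ f.faceAt w
    · exact .of_forall fun _ _ => hμw
    obtain ⟨ν, hν, hlt⟩ : ∃ ν ∈ f.supp, dot w μ < dot w ν := by
      simpa [mem_faceAt_iff_of_mem_supp hμ] using hμw
    filter_upwards [(continuous_dot_left μ).continuousAt.eventually_lt
      (continuous_dot_left ν).continuousAt hlt] with v hv hμv
    exact absurd (hμv.2 ν (subset_convexHull ℝ _ hν)) hv.not_ge
  filter_upwards [hsupp] with v hv
  rw [← f.convexHull_supp_inter_faceAt v]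
  exact convexHull_min (fun μ hμ => hv μ hμ.1 hμ.2) (f.convex_faceAt w)

end Face

end Signomial

open Signomial in
/-- If `w ∈ ⋂ᵢ N_{fᵢ}^-` lies in the closure of the interior of
`⋂ᵢ N_{fᵢ}^-`, then there is `v` such that for every `i` the face `N(fᵢ)_v` is a
negative vertex of `N(fᵢ)` contained in `N(fᵢ)_w`. -/
theorem negVertex_of_mem_closure_interior {n k : ℕ} (f : Fin k → Signomial n)
    (w : Fin n → ℝ) (hw : w ∈ ⋂ i, negCone (f i))
    (h : w ∈ closure (interior (⋂ i, negCone (f i)))) :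
    ∃ v : Fin n → ℝ, ∀ i, ∃ μ : Fin n → ℝ,
      (f i).faceAt v = {μ} ∧ μ ∈ (f i).supp ∧ (f i).coeff μ < 0 ∧
        μ ∈ (f i).faceAt w := by
  have hnear : ∀ᶠ v in 𝓝 w, ∀ i, (f i).faceAt v ⊆ (f i).faceAt w :=
    eventually_all.mpr fun i => (f i).eventually_faceAt_subset w
  have hgeneric : Dense {v | InjOn (dot v) (⋃ i, ((f i).supp : Set (Fin n → ℝ)))} :=
    dense_setOf_injOn_dot (finite_iUnion fun i => (f i).supp.finite_toSet)
  have hw_limit : w ∈ closure (interior (⋂ i, negCone (f i)) ∩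
      {v | InjOn (dot v) (⋃ i, ((f i).supp : Set (Fin n → ℝ)))}) :=
    closure_minimal (hgeneric.open_subset_closure_inter isOpen_interior) isClosed_closure h
  obtain ⟨v, ⟨hv_int, hv_inj⟩, hv_near⟩ :=
    ((mem_closure_iff_frequently.mp hw_limit).and_eventually hnear).exists
  refine ⟨v, fun i => ?_⟩
  obtain ⟨μ, hμ, hneg, hμv⟩ := mem_iInter.mp (interior_subset hv_int) i
  have hinj : InjOn (dot v) (f i).supp := hv_inj.mono (subset_iUnion_of_subset i subset_rfl)
  exact ⟨μ, faceAt_eq_singleton_of_injOn hinj hμ hμv, hμ, hneg, hv_near i hμv⟩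
end

section
/- Let f₁, …, f_k be signomials on ℝⁿ_{>0}. Then the interior of the intersection of the negative normal cones is contained in the actual negative normal cone: int( ⋂_{i=1}^{k} N_{f_i}^- ) ⊆ Σ(f₁, …, f_k). -/
/-!
Perturb `v` in a direction `u` that separates all exponent vectors. For small `ε > 0` the functional
`v + ε u` is maximised over `σ(f_i)` only at the maximiser `m_i` of `u` on the face `N(f_i)_v`.
If `v` is interior to `N_{f_i}^-`, then `v + ε u` still lies in this cone, so the coefficient of
`x ^ m_i` is negative. This monomial dominates the restriction of `f_i` to `N(f_i)_v` along the
curve `t ↦ (exp (t u_j))_j`, so all the restrictions are negative there for large `t`.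
-/

open Filter Topology

theorem exists_dual_injOn (K : Type*) {V : Type*} [Field K] [Infinite K] [AddCommGroup V]
    [Module K V] {s : Set V} (hs : s.Finite) : ∃ φ : Module.Dual K V, s.InjOn φ := by
  have : Finite s.offDiag := hs.offDiag
  obtain ⟨φ, hφ⟩ := Module.exists_dual_forall_apply_ne_zero (K := K)
    (fun p : s.offDiag ↦ p.1.1 - p.1.2) fun p ↦ sub_ne_zero.2 p.2.2.2
  refine ⟨φ, fun x hx y hy hxy ↦ by_contra fun hne ↦ hφ ⟨(x, y), hx, hy, hne⟩ ?_⟩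
  rw [map_sub, hxy, sub_self]

theorem exists_mem_forall_ne_lt_of_injOn {ι α : Type*} [LinearOrder α] {s : Finset ι} {g : ι → α}
    (hs : s.Nonempty) (hg : Set.InjOn g s) : ∃ m ∈ s, ∀ i ∈ s, i ≠ m → g i < g m := by
  obtain ⟨m, hm, hmax⟩ := s.exists_max_image g hs
  exact ⟨m, hm, fun i hi hne ↦ (hmax i hi).lt_of_ne (hg.ne hi hm hne)⟩

theorem tendsto_add_smul_nhdsWithin_zero {R E : Type*} [Zero R] [TopologicalSpace R]
    [AddZeroClass E] [TopologicalSpace E] [ContinuousAdd E] [SMulWithZero R E] [ContinuousSMul R E]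
    (s : Set R) (x y : E) : Tendsto (fun ε : R ↦ x + ε • y) (𝓝[s] 0) (𝓝 x) := by
  have hcont : Continuous fun ε : R ↦ x + ε • y := by fun_prop
  simpa only [zero_smul, add_zero] using (hcont.tendsto 0).mono_left nhdsWithin_le_nhds

theorem eventually_add_mul_lt_add_mul_of_toLex_lt {R : Type*} [Semiring R] [LinearOrder R]
    [IsStrictOrderedRing R] [TopologicalSpace R] [OrderClosedTopology R] [IsTopologicalSemiring R]
    {a b a' b' : R} (h : toLex (a, b) < toLex (a', b')) :
    ∀ᶠ ε in 𝓝[>] 0, a + ε * b < a' + ε * b' := by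
  rcases Prod.Lex.toLex_lt_toLex.1 h with hlt | ⟨rfl : a = a', hlt : b < b'⟩
  · exact (tendsto_add_smul_nhdsWithin_zero _ a b).eventually_lt
      (tendsto_add_smul_nhdsWithin_zero _ a' b') hlt
  · filter_upwards [self_mem_nhdsWithin] with ε (hε : 0 < ε)
    gcongr

section DominantExponential

variable {ι : Type*} {s : Finset ι} {m : ι} {a : ι → ℝ}

theorem tendsto_sum_mul_exp_mul_sub (c : ι → ℝ) (hm : m ∈ s)
    (ha : ∀ i ∈ s, i ≠ m → a i < a m) :
    Tendsto (fun t ↦ ∑ i ∈ s, c i * Real.exp (t * (a i - a m))) atTop (𝓝 (c m)) := by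
  classical
  rw [← Finset.sum_ite_eq_of_mem' s m c hm]
  refine tendsto_finsetSum _ fun i hi ↦ ?_
  split_ifs with him
  · simp only [him, sub_self, mul_zero, Real.exp_zero, mul_one, tendsto_const_nhds]
  · have hexponent : Tendsto (fun t ↦ t * (a i - a m)) atTop atBot :=
      tendsto_id.atTop_mul_const_of_neg (sub_neg.2 (ha i hi him))
    simpa only [mul_zero, Function.comp_apply] using
      (Real.tendsto_exp_atBot.comp hexponent).const_mul (c i)

theorem eventually_sum_mul_exp_neg {c : ι → ℝ} (hm : m ∈ s)
    (ha : ∀ i ∈ s, i ≠ m → a i < a m) (hc : c m < 0) :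
    ∀ᶠ t in atTop, ∑ i ∈ s, c i * Real.exp (t * a i) < 0 := by
  filter_upwards [(tendsto_sum_mul_exp_mul_sub c hm ha).eventually_lt_const hc] with t ht
  calc ∑ i ∈ s, c i * Real.exp (t * a i)
      = Real.exp (t * a m) * ∑ i ∈ s, c i * Real.exp (t * (a i - a m)) := by
        rw [Finset.mul_sum]
        refine Finset.sum_congr rfl fun i _ ↦ ?_
        rw [mul_left_comm, ← Real.exp_add]
        ring_nf
    _ < 0 := mul_neg_of_pos_of_neg (Real.exp_pos _) ht

end DominantExponential

namespace Signomial

variable {n : ℕ} {f : Signomial n} {u v m ν : Fin n → ℝ}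

theorem dot_add_smul (v u μ : Fin n → ℝ) (ε : ℝ) :
    dot (v + ε • u) μ = dot v μ + ε * dot u μ := by
  change (v + ε • u) ⬝ᵥ μ = v ⬝ᵥ μ + ε * u ⬝ᵥ μ
  rw [add_dotProduct, smul_dotProduct, smul_eq_mul]

theorem exists_dot_injOn {s : Set (Fin n → ℝ)} (hs : s.Finite) : ∃ u, s.InjOn (dot u) := by
  obtain ⟨φ, hφ⟩ := exists_dual_injOn ℝ hs
  obtain ⟨u, rfl⟩ := (dotProductEquiv ℝ (Fin n)).surjective φ
  exact ⟨u, hφ⟩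

theorem mono_exp_mul (u μ : Fin n → ℝ) (t : ℝ) :
    mono (fun i ↦ Real.exp (t * u i)) μ = Real.exp (t * dot u μ) := by
  simp only [mono, dot, Finset.mul_sum, Real.exp_sum, ← Real.exp_mul, mul_assoc]

theorem evalOn_exp_mul (f : Signomial n) (S : Set (Fin n → ℝ)) (u : Fin n → ℝ) (t : ℝ) :
    f.evalOn S (fun i ↦ Real.exp (t * u i)) =
      ∑ μ ∈ f.restSupp S, f.coeff μ * Real.exp (t * dot u μ) := by
  simp only [evalOn, restSupp, Finset.sum_filter, mono_exp_mul]

theorem mem_restSupp {S : Set (Fin n → ℝ)} : m ∈ f.restSupp S ↔ m ∈ f.supp ∧ m ∈ S := by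
  simp only [restSupp, Finset.mem_filter]

theorem restSupp_subset_supp (f : Signomial n) (S : Set (Fin n → ℝ)) : f.restSupp S ⊆ f.supp :=
  fun _ hμ ↦ (mem_restSupp.1 hμ).1

theorem supp_subset_newton (f : Signomial n) : (f.supp : Set (Fin n → ℝ)) ⊆ f.newton :=
  subset_convexHull ℝ _

theorem dot_lt_of_mem_faceAt_of_notMem (hm : m ∈ f.faceAt v) (hν : ν ∈ f.newton)
    (hνv : ν ∉ f.faceAt v) : dot v ν < dot v m := by
  by_contra! hle
  exact hνv ⟨hν, fun κ hκ ↦ (hm.2 κ hκ).trans hle⟩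

theorem dot_eq_of_mem_faceAt (hm : m ∈ f.faceAt v) (hν : ν ∈ f.faceAt v) : dot v ν = dot v m :=
  le_antisymm (hm.2 ν hν.1) (hν.2 m hm.1)

theorem toLex_dot_lt_of_forall_restSupp (hm : m ∈ f.faceAt v)
    (hmax : ∀ μ ∈ f.restSupp (f.faceAt v), μ ≠ m → dot u μ < dot u m)
    (hν : ν ∈ f.supp) (hne : ν ≠ m) :
    toLex (dot v ν, dot u ν) < toLex (dot v m, dot u m) := by
  rw [Prod.Lex.toLex_lt_toLex]
  by_cases hνv : ν ∈ f.faceAt v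
  · exact .inr ⟨dot_eq_of_mem_faceAt hm hνv, hmax ν (mem_restSupp.2 ⟨hν, hνv⟩) hne⟩
  · exact .inl (dot_lt_of_mem_faceAt_of_notMem hm (f.supp_subset_newton hν) hνv)

theorem eventually_forall_dot_add_smul_lt (hm : m ∈ f.faceAt v)
    (hmax : ∀ μ ∈ f.restSupp (f.faceAt v), μ ≠ m → dot u μ < dot u m) :
    ∀ᶠ ε : ℝ in 𝓝[>] 0, ∀ ν ∈ f.supp, ν ≠ m → dot (v + ε • u) ν < dot (v + ε • u) m := by
  simp only [dot_add_smul, Finset.eventually_all, eventually_imp_distrib_left]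
  exact fun ν hν hne ↦ eventually_add_mul_lt_add_mul_of_toLex_lt
    (toLex_dot_lt_of_forall_restSupp hm hmax hν hne)

theorem coeff_neg_of_mem_negCone (hv : v ∈ f.negCone) (hm : m ∈ f.newton)
    (hmax : ∀ μ ∈ f.supp, μ ≠ m → dot v μ < dot v m) : f.coeff m < 0 := by
  obtain ⟨μ, hμ, hμneg, hμv⟩ := hv
  obtain rfl : μ = m := by_contra fun hne ↦ (hmax μ hμ hne).not_ge (hμv.2 m hm)
  exact hμneg

theorem coeff_neg_of_mem_interior_negCone (hv : v ∈ interior f.negCone) (hm : m ∈ f.faceAt v)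
    (hmax : ∀ μ ∈ f.restSupp (f.faceAt v), μ ≠ m → dot u μ < dot u m) : f.coeff m < 0 := by
  have hmem : ∀ᶠ ε : ℝ in 𝓝[>] 0, v + ε • u ∈ f.negCone :=
    (tendsto_add_smul_nhdsWithin_zero _ v u).eventually_mem (mem_interior_iff_mem_nhds.1 hv)
  obtain ⟨ε, hε, hlt⟩ := (hmem.and (eventually_forall_dot_add_smul_lt hm hmax)).exists
  exact coeff_neg_of_mem_negCone hε hm.1 hlt

theorem restSupp_faceAt_nonempty_of_mem_negCone (hv : v ∈ f.negCone) :
    (f.restSupp (f.faceAt v)).Nonempty :=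
  let ⟨μ, hμ, _, hμv⟩ := hv
  ⟨μ, mem_restSupp.2 ⟨hμ, hμv⟩⟩

theorem eventually_evalOn_faceAt_neg (hv : v ∈ interior f.negCone)
    (hu : Set.InjOn (dot u) f.supp) :
    ∀ᶠ t : ℝ in atTop, f.evalOn (f.faceAt v) (fun i ↦ Real.exp (t * u i)) < 0 := by
  obtain ⟨m, hm, hmax⟩ := exists_mem_forall_ne_lt_of_injOn
    (restSupp_faceAt_nonempty_of_mem_negCone (interior_subset hv))
    (hu.mono (f.restSupp_subset_supp (f.faceAt v)))
  have hneg : f.coeff m < 0 :=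
    coeff_neg_of_mem_interior_negCone hv (mem_restSupp.1 hm).2 hmax
  simp only [evalOn_exp_mul]
  exact eventually_sum_mul_exp_neg hm hmax hneg

end Signomial

open Signomial in
/-- `int(⋂ᵢ N_{fᵢ}^-) ⊆ Σ(f₁, …, f_k)`. -/
theorem interior_negCones_subset_actualNegCone {n k : ℕ} (f : Fin k → Signomial n) :
    interior (⋂ i, negCone (f i)) ⊆ actualNegCone f := by
  intro v hv
  obtain ⟨u, hu⟩ := exists_dot_injOn (Set.finite_iUnion fun i ↦ (f i).supp.finite_toSet)
  have hneg (i : Fin k) : ∀ᶠ t : ℝ in atTop,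
      (f i).evalOn ((f i).faceAt v) (fun j ↦ Real.exp (t * u j)) < 0 :=
    eventually_evalOn_faceAt_neg (interior_mono (Set.iInter_subset _ i) hv)
      (hu.mono (Set.subset_iUnion_of_subset i subset_rfl))
  obtain ⟨t, ht⟩ := (eventually_all.2 hneg).exists
  exact ⟨_, fun j ↦ Real.exp_pos _, ht⟩
end
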